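/- For every state x ∈ X, every signal input s, and every link l, the total inflow to link l is bounded by its residual capacity: ∑_{j ∈ L^up_l} β_{jl}·f^out_j(x, s) ≤ x^cap_l − x_l. Consequently, x_l − f^out_l(x, s) + ∑_{j ∈ L^up_l} β_{jl}·f^out_j(x, s) ≤ x^cap_l; in particular, when d_l = 0 the minimum with x^cap_l in the definition of F_l never strictly binds, i.e. F_l(x, s, d) = x_l − f^out_l(x, s) + ∑_{j ∈ L^up_l} β_{jl}·f^out_j(x, s) whenever d_l = 0. -/

import Mathlib

open Finset
open scoped Classical

/-- Outflow `f^out_l(x, s)` of link `l` under signal `s`. -/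
noncomputable def fout {L : Type*} [Fintype L]
    (c xcap : L → ℝ) (β α : L → L → ℝ) (s : Finset L)
    (x : L → ℝ) (l : L) : ℝ :=
  if l ∈ s then
    (Finset.univ.filter fun k => 0 < β l k).fold min (min (x l) (c l))
      fun k => α l k / β l k * (xcap k - x k)
  else 0

/-- Queue update `F_l(x, s, d)`, with `L^up_l = {j : η j = τ l}`. -/
noncomputable def Fupd {L V : Type*} [Fintype L]
    (η : L → V) (τ : L → Option V)
    (c xcap : L → ℝ) (β α : L → L → ℝ) (s : Finset L)
    (x d : L → ℝ) (l : L) : ℝ :=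
  min (xcap l)
    (x l - fout c xcap β α s x l
      + ∑ j ∈ Finset.univ.filter (fun j => τ l = some (η j)), β j l * fout c xcap β α s x j
      + d l)

/-! The supply term of the minimum defining `fout` grants each actuated upstream link `j` at most the
fraction `α j l` of the residual capacity of `l`, and these fractions add up to at most one. -/

theorem sum_le_of_nonempty_imp {ι M : Type*} [AddCommMonoid M] [LE M] {t : Finset ι} {f : ι → M}
    {b : M} (hb : 0 ≤ b) (h : t.Nonempty → ∑ i ∈ t, f i ≤ b) : ∑ i ∈ t, f i ≤ b := by
  rcases t.eq_empty_or_nonempty with rfl | ht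
  · rwa [Finset.sum_empty]
  · exact h ht

section Outflow

variable {L : Type*} [Fintype L] {c xcap : L → ℝ} {β α : L → L → ℝ} {s : Finset L} {x : L → ℝ}

theorem fout_of_notMem {j : L} (hj : j ∉ s) : fout c xcap β α s x j = 0 :=
  if_neg hj

theorem fout_nonneg {j : L} (hc : 0 ≤ c j) (hx : 0 ≤ x j) (hα : ∀ k, 0 < β j k → 0 ≤ α j k)
    (hcap : ∀ k, 0 < β j k → x k ≤ xcap k) : 0 ≤ fout c xcap β α s x j := by
  unfold fout
  split_ifs
  · refine (Finset.le_fold_min _).2 ⟨le_min hx hc, fun k hk => ?_⟩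
    have hβ : 0 < β j k := (Finset.mem_filter.1 hk).2
    exact mul_nonneg (div_nonneg (hα k hβ) hβ.le) (sub_nonneg.2 (hcap k hβ))
  · exact le_rfl

theorem fout_le_supply {j k : L} (hj : j ∈ s) (hβ : 0 < β j k) :
    fout c xcap β α s x j ≤ α j k / β j k * (xcap k - x k) := by
  unfold fout
  rw [if_pos hj]
  exact (Finset.fold_min_le _).2
    (Or.inr ⟨k, Finset.mem_filter.2 ⟨Finset.mem_univ k, hβ⟩, le_rfl⟩)

theorem mul_fout_le_supply {j k : L} (hj : j ∈ s) (hα : 0 ≤ α j k) (hcap : x k ≤ xcap k)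
    (hfout : 0 ≤ fout c xcap β α s x j) :
    β j k * fout c xcap β α s x j ≤ α j k * (xcap k - x k) := by
  rcases le_or_gt (β j k) 0 with hβ | hβ
  · exact (mul_nonpos_of_nonpos_of_nonneg hβ hfout).trans (mul_nonneg hα (sub_nonneg.2 hcap))
  · calc β j k * fout c xcap β α s x j
        ≤ β j k * (α j k / β j k * (xcap k - x k)) :=
          mul_le_mul_of_nonneg_left (fout_le_supply hj hβ) hβ.le
      _ = α j k * (xcap k - x k) := by rw [← mul_assoc, mul_div_cancel₀ _ hβ.ne']

theorem sum_mul_fout_le_sum_mul_residual {J : Finset L} {l : L} (hα : ∀ j ∈ J, 0 ≤ α j l)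
    (hcap : x l ≤ xcap l) (hfout : ∀ j ∈ J, 0 ≤ fout c xcap β α s x j) :
    ∑ j ∈ J, β j l * fout c xcap β α s x j ≤ (∑ j ∈ J with j ∈ s, α j l) * (xcap l - x l) := by
  have actuated_of_ne_zero : ∀ j ∈ J, β j l * fout c xcap β α s x j ≠ 0 → j ∈ s :=
    fun j _ => not_imp_comm.1 fun hj => by rw [fout_of_notMem hj, mul_zero]
  rw [← Finset.sum_filter_of_ne actuated_of_ne_zero, Finset.sum_mul]
  refine Finset.sum_le_sum fun j hj => ?_
  obtain ⟨hjJ, hjs⟩ := Finset.mem_filter.1 hj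
  exact mul_fout_le_supply hjs (hα j hjJ) hcap (hfout j hjJ)

end Outflow

theorem traffic_inflow_le_residual_capacity_general {L V : Type*} [Fintype L]
    (η : L → V) (τ : L → Option V) {c xcap : L → ℝ} (hc : ∀ j, 0 ≤ c j)
    (β : L → L → ℝ) {s : Finset L} {α : L → L → ℝ} (hα : ∀ j k, 0 ≤ α j k)
    {x : L → ℝ} (hx : ∀ m, 0 ≤ x m ∧ x m ≤ xcap m) {l : L}
    (hαsum : ∑ j ∈ Finset.univ.filter (fun j => j ∈ s ∧ some (η j) = τ l), α j l ≤ 1) :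
    (∑ j ∈ Finset.univ.filter (fun j => τ l = some (η j)), β j l * fout c xcap β α s x j
        ≤ xcap l - x l) ∧
    (x l - fout c xcap β α s x l
        + ∑ j ∈ Finset.univ.filter (fun j => τ l = some (η j)), β j l * fout c xcap β α s x j
        ≤ xcap l) ∧
    (∀ d : L → ℝ, d l = 0 →
      Fupd η τ c xcap β α s x d l =
        x l - fout c xcap β α s x l
          + ∑ j ∈ Finset.univ.filter (fun j => τ l = some (η j)),
              β j l * fout c xcap β α s x j) := by
  have outflow_nonneg (j : L) : 0 ≤ fout c xcap β α s x j :=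
    fout_nonneg (hc j) (hx j).1 (fun k _ => hα j k) fun k _ => (hx k).2
  have supply_le_one :
      ∑ j ∈ Finset.univ.filter (fun j => τ l = some (η j)) with j ∈ s, α j l ≤ 1 := by
    simpa only [Finset.filter_filter, and_comm, eq_comm] using hαsum
  have inflow_le := (sum_mul_fout_le_sum_mul_residual (β := β) (fun j _ => hα j l) (hx l).2
    fun j _ => outflow_nonneg j).trans
      (mul_le_of_le_one_left (sub_nonneg.2 (hx l).2) supply_le_one)
  have queue_le : x l - fout c xcap β α s x l
      + ∑ j ∈ Finset.univ.filter (fun j => τ l = some (η j)), β j l * fout c xcap β α s x j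
      ≤ xcap l := by
    linarith [outflow_nonneg l]
  refine ⟨inflow_le, queue_le, fun d hd => ?_⟩
  rw [Fupd, hd, add_zero, min_eq_right queue_le]

/-- For every state `x ∈ X`, signal `s`, and link `l`, the total inflow
to `l` is bounded by its residual capacity, hence
`x l − f^out_l + ∑_{j ∈ L^up_l} β j l · f^out_j ≤ xcap l`; in particular when `d l = 0`
the minimum with `xcap l` in `F_l` never strictly binds. -/
theorem traffic_inflow_le_residual_capacity {L V : Type*} [Fintype L]
    (η : L → V) (τ : L → Option V) (hself : ∀ l, some (η l) ≠ τ l)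
    (c xcap : L → ℝ) (hc : ∀ l, 0 < c l) (hcap : ∀ l, 0 < xcap l)
    (β : L → L → ℝ) (hβ : ∀ l k, 0 ≤ β l k)
    (hβsupp : ∀ l k, 0 < β l k → τ k = some (η l))
    (hβsum : ∀ l, ∑ k ∈ Finset.univ.filter (fun k => τ k = some (η l)), β l k ≤ 1)
    (s : Finset L) (α : L → L → ℝ) (hα : ∀ l k, 0 < α l k)
    (hαsum : ∀ k, (Finset.univ.filter fun j => j ∈ s ∧ some (η j) = τ k).Nonempty →
      ∑ j ∈ Finset.univ.filter (fun j => j ∈ s ∧ some (η j) = τ k), α j k = 1)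
    (x : L → ℝ) (hx : ∀ m, 0 ≤ x m ∧ x m ≤ xcap m) (l : L) :
    (∑ j ∈ Finset.univ.filter (fun j => τ l = some (η j)), β j l * fout c xcap β α s x j
        ≤ xcap l - x l) ∧
    (x l - fout c xcap β α s x l
        + ∑ j ∈ Finset.univ.filter (fun j => τ l = some (η j)), β j l * fout c xcap β α s x j
        ≤ xcap l) ∧
    (∀ d : L → ℝ, d l = 0 →
      Fupd η τ c xcap β α s x d l =
        x l - fout c xcap β α s x l
          + ∑ j ∈ Finset.univ.filter (fun j => τ l = some (η j)),
              β j l * fout c xcap β α s x j) := by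
  exact traffic_inflow_le_residual_capacity_general η τ (fun j => (hc j).le) β
    (fun j k => (hα j k).le) hx (sum_le_of_nonempty_imp zero_le_one fun h => (hαsum l h).le)
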